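/- For all real numbers r and α with r ≥ 3^{3/2} and α ≥ 1: r/(r + α) ≥ (1/4)·(log(1 + r/α))/(log r). -/

import Mathlib

/-! With `x = r / α ∈ (0, r]` the claim reads `(1 + x) log (1 + x) / x ≤ 4 log r`. The left side
is the slope of the secant of the convex function `t log t` through `1` and `1 + x`, so it is
largest at `x = r`. There `1 + r ≤ r ^ 2`, which holds from the golden ratio on, bounds it by
`2 (1 + r) / r * log r`, and `1 + r ≤ 2 r`. -/

open Real

theorem monotoneOn_mul_log_div_sub_one :
    MonotoneOn (fun t : ℝ ↦ t * log t / (t - 1)) (Set.Ici 0 \ {1}) := by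
  intro s hs t ht hst
  simpa using convexOn_mul_log.secant_mono (Set.mem_Ici.2 zero_le_one) hs.1 ht.1 hs.2 ht.2 hst

theorem one_add_le_sq_of_goldenRatio_le {r : ℝ} (hr : goldenRatio ≤ r) : 1 + r ≤ r ^ 2 := by
  nlinarith [goldenRatio_sq, one_lt_goldenRatio]

theorem one_add_mul_log_one_add_div_self_le {r : ℝ} (hr : goldenRatio ≤ r) :
    (1 + r) * log (1 + r) / r ≤ 4 * log r := by
  have one_lt_r : 1 < r := one_lt_goldenRatio.trans_le hr
  have log_one_add_le : log (1 + r) ≤ 2 * log r :=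
    calc log (1 + r) ≤ log (r ^ 2) :=
          log_le_log (by positivity) (one_add_le_sq_of_goldenRatio_le hr)
      _ = 2 * log r := by rw [log_pow, Nat.cast_ofNat]
  have log_one_add_nonneg : 0 ≤ log (1 + r) := log_nonneg (by linarith)
  rw [div_le_iff₀ (by positivity)]
  calc (1 + r) * log (1 + r) ≤ (2 * r) * (2 * log r) := by gcongr; linarith
    _ = 4 * log r * r := by ring

theorem one_add_mul_log_one_add_div_le {r x : ℝ} (hr : goldenRatio ≤ r) (hx : 0 < x)
    (hxr : x ≤ r) : (1 + x) * log (1 + x) / x ≤ 4 * log r := by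
  have mem_domain {y : ℝ} (hy : 0 < y) : 1 + y ∈ Set.Ici (0 : ℝ) \ {1} :=
    ⟨Set.mem_Ici.2 (by positivity), by simpa using hy.ne'⟩
  calc (1 + x) * log (1 + x) / x ≤ (1 + r) * log (1 + r) / r := by
        simpa using monotoneOn_mul_log_div_sub_one (mem_domain hx) (mem_domain (hx.trans_le hxr))
          (add_le_add_right hxr 1)
    _ ≤ 4 * log r := one_add_mul_log_one_add_div_self_le hr

theorem log_ratio_bound_general {r α : ℝ} (hr : goldenRatio ≤ r) (hα : 1 ≤ α) :
    1 / 4 * (log (1 + r / α) / log r) ≤ r / (r + α) := by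
  have one_lt_r : 1 < r := one_lt_goldenRatio.trans_le hr
  have log_r_pos : 0 < log r := log_pos one_lt_r
  have slope_le := one_add_mul_log_one_add_div_le hr (x := r / α) (by positivity)
    (div_le_self (by positivity) hα)
  calc 1 / 4 * (log (1 + r / α) / log r)
      = (1 + r / α) * log (1 + r / α) / (r / α) / (4 * log r) * (r / (r + α)) := by
        field_simp
        ring
    _ ≤ 1 * (r / (r + α)) := by
        gcongr
        exact div_le_one_of_le₀ slope_le (by positivity)
    _ = r / (r + α) := one_mul _

theorem goldenRatio_le_three_rpow : goldenRatio ≤ (3 : ℝ) ^ ((3 : ℝ) / 2) :=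
  calc goldenRatio ≤ 3 := by linarith [goldenRatio_lt_two]
    _ ≤ (3 : ℝ) ^ ((3 : ℝ) / 2) := self_le_rpow_of_one_le (by norm_num) (by norm_num)

/-- For all reals `r ≥ 3^(3/2)` and `α ≥ 1`:
`r / (r + α) ≥ (1/4) · log(1 + r/α) / log r`. -/
theorem log_ratio_bound
    (r α : ℝ) (hr : (3 : ℝ) ^ ((3 : ℝ) / 2) ≤ r) (hα : 1 ≤ α) :
    1 / 4 * (Real.log (1 + r / α) / Real.log r) ≤ r / (r + α) :=
  log_ratio_bound_general (goldenRatio_le_three_rpow.trans hr) hα
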